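/- arXiv:1108.6215 — 2 statements merged into one kernel-verified Lean document; each statement's English description precedes it below -/
import Mathlib

section
/- The complex cyclic quartic number field of conductor 37 is not norm-Euclidean. -/
open NumberField

def IsNormEuclidean (K : Type*) [Field K] [NumberField K] : Prop :=
  ∀ ξ : K, ∃ η : 𝓞 K, |Algebra.norm ℚ (ξ - (η : K))| < 1

def IsTotallyImaginary (K : Type*) [Field K] [NumberField K] : Prop :=
  ∀ φ : K →+* ℂ, ¬ ComplexEmbedding.IsReal φ

theorem norm_congr_aux {K : Type*} [Field K] [NumberField K] (p : ℕ) (x d : 𝓞 K) :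
    ((Algebra.norm ℤ (x + (p:𝓞 K) * d) : ℤ) : ZMod p) = ((Algebra.norm ℤ x : ℤ) : ZMod p) := by
  classical
  have b := RingOfIntegers.basis K
  rw [Algebra.norm_eq_matrix_det b, Algebra.norm_eq_matrix_det b]
  have h := fun M => RingHom.map_det (Int.castRingHom (ZMod p)) (M : Matrix (Module.Free.ChooseBasisIndex ℤ (𝓞 K)) _ ℤ)
  simp only [eq_intCast] at h
  rw [h, h]
  congr 1
  rw [map_add, map_mul, map_natCast, map_add, map_mul, map_natCast, CharP.cast_eq_zero, zero_mul, add_zero]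

theorem frob_aux {R : Type*} [CommRing R] (p : ℕ) (hp : p.Prime) (x y : R) :
    ∃ r, (x + y) ^ p = x ^ p + y ^ p + p * r := by
  obtain ⟨r, hr⟩ := exists_add_pow_prime_eq hp x y
  exact ⟨x * y * r, by rw [hr]; ring⟩

theorem norm_prime_aux {L : Type*} [Field L] [NumberField L] [IsCyclotomicExtension {37} ℚ L]
    (p : ℕ) (hp : p.Prime) (hp37 : ¬ p ∣ 37) (x : 𝓞 L) (h : (p : ℤ) ∣ Algebra.norm ℤ x) :
    (p : ℤ) ^ orderOf (p : ZMod 37) ∣ Algebra.norm ℤ x := by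
  have : Fact p.Prime := ⟨hp⟩
  have h1 : (p : ℤ) ∣ (Ideal.absNorm (Ideal.span {x}) : ℤ) := by
    rw [Ideal.absNorm_span_singleton]; exact Int.dvd_natAbs.mpr h
  obtain ⟨P, hP, hPp, hPx⟩ :=
    Ideal.exists_isMaximal_dvd_of_dvd_absNorm (Nat.prime_iff_prime_int.mp hp) _ h1
  have : P.LiesOver (Ideal.span {(p : ℤ)}) := ⟨hPp.symm⟩
  have h2 := Ideal.absNorm_dvd_absNorm_of_le (Ideal.dvd_iff_le.mp hPx)
  rw [← Ideal.natAbs_pow_inertiaDeg p, Ideal.absNorm_span_singleton,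
    IsCyclotomicExtension.Rat.inertiaDeg_eq_of_not_dvd (m := 37) p L P hp37, 
    ← Int.natAbs_pow, Int.natAbs_dvd_natAbs] at h2
  exact h2

theorem no_norm_aux {L : Type*} [Field L] [NumberField L] [IsCyclotomicExtension {37} ℚ L]
    (p : ℕ) (hp : p.Prime) (hp37 : ¬ p ∣ 37) (ho : ∀ n : ℕ, n < 10 → 0 < n → (p : ZMod 37) ^ n ≠ 1)
    (n : ℤ) (hn : (p : ℤ) ∣ n)
    (hn2 : ¬ (p : ℤ) ^ 10 ∣ n ^ 9) (x : 𝓞 L) : Algebra.norm ℤ x ≠ n ^ 9 := by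
  intro h
  have h1 := norm_prime_aux p hp hp37 x (h ▸ dvd_pow hn (by norm_num))
  rw [h] at h1
  refine hn2 ((pow_dvd_pow _ ?_).trans h1)
  by_contra hlt
  refine ho _ (not_le.mp hlt) ?_ (pow_orderOf_eq_one _)
  rw [orderOf_pos_iff]
  have hc : Nat.Coprime p 37 := (Nat.Prime.coprime_iff_not_dvd hp).mpr hp37
  have hu := isOfFinOrder_of_finite (ZMod.unitOfCoprime p hc)
  obtain ⟨n, hn0, hn1⟩ := isOfFinOrder_iff_pow_eq_one.mp hu
  refine isOfFinOrder_iff_pow_eq_one.mpr ⟨n, hn0, ?_⟩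
  simpa using congrArg Units.val hn1

theorem no34 {L : Type*} [Field L] [NumberField L] [IsCyclotomicExtension {37} ℚ L]
    (x : 𝓞 L) : Algebra.norm ℤ x ≠ 34 ^ 9 :=
  no_norm_aux 2 (by norm_num) (by norm_num) (by decide) 34 (by norm_num) (by norm_num) x

theorem no3 {L : Type*} [Field L] [NumberField L] [IsCyclotomicExtension {37} ℚ L]
    (x : 𝓞 L) : Algebra.norm ℤ x ≠ (-3) ^ 9 :=
  no_norm_aux 3 (by norm_num) (by norm_num) (by decide) (-3) (by norm_num) (by norm_num) x

theorem main_aux {K L : Type*} [Field K] [NumberField K] [Field L] [NumberField L]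
    [IsCyclotomicExtension {37} ℚ L] [Algebra K L] (h4 : Module.finrank ℚ K = 4)
    (H : IsNormEuclidean K) : False := by
  have : Fact (Nat.Prime 37) := ⟨by norm_num⟩
  have : IsGalois ℚ L := IsCyclotomicExtension.isGalois {37} ℚ L
  have : IsGalois K L := IsGalois.tower_top_of_isGalois ℚ K L
  have hfin : Module.finrank K L = 9 := by
    have h := Module.finrank_mul_finrank ℚ K L
    rw [h4, IsCyclotomicExtension.finrank (n := 37) L (Polynomial.cyclotomic.irreducible_rat (by norm_num)),
      Nat.totient_prime (by norm_num)] at h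
    omega
  have hζ := IsCyclotomicExtension.zeta_spec 37 ℚ L
  set z := hζ.toInteger with hz
  have hz1 : z ^ 37 = 1 := hζ.toInteger_isPrimitiveRoot.pow_eq_one
  have hN : Algebra.norm ℤ (z - 1) = 37 := hζ.norm_toInteger_sub_one_of_prime_ne_two' (by norm_num)
  -- the element of `K` of norm 37
  set π : 𝓞 K := RingOfIntegers.norm K (z - 1) with hπ
  have hπN : Algebra.norm ℚ (π : K) = 37 := by
    rw [hπ, RingOfIntegers.coe_norm, Algebra.norm_norm, ← Algebra.coe_norm_int, hN]; norm_num
  have hπ0 : (π : K) ≠ 0 := by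
    intro h; rw [h, Algebra.norm_zero] at hπN; norm_num at hπN
  -- `37 ∣ π ^ 37`
  have hz37 : (37 : 𝓞 L) ∣ (z - 1) ^ 37 := by
    obtain ⟨r, hr⟩ := frob_aux 37 (by norm_num) z (-1)
    rw [← sub_eq_add_neg, hz1] at hr
    exact ⟨r, by rw [hr, Odd.neg_one_pow (by decide)]; push_cast; ring⟩
  have hdL : (37 : 𝓞 L) ∣ (algebraMap (𝓞 K) (𝓞 L) π) ^ 37 :=
    hz37.trans (pow_dvd_pow_of_dvd (RingOfIntegers.dvd_norm K (z - 1)) 37)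
  have hd : (37 : 𝓞 K) ∣ π ^ 37 := by
    obtain ⟨c, hc⟩ := hdL
    have hc' : algebraMap K L ((π : K) ^ 37 / 37) = (c : L) := by
      have := congrArg (algebraMap (𝓞 L) L) hc
      simp only [map_pow, map_mul, map_ofNat] at this
      rw [map_div₀, map_pow, map_ofNat, div_eq_iff (by norm_num), mul_comm, ← this]
      rfl
    have hint : IsIntegral ℤ ((π : K) ^ 37 / 37) := by
      rw [← isIntegral_algebraMap_iff (algebraMap K L).injective (R := ℤ), hc']
      exact RingOfIntegers.isIntegral_coe c
    obtain ⟨d, hd⟩ : ∃ d : 𝓞 K, (d : K) = (π : K) ^ 37 / 37 := ⟨⟨_, hint⟩, rfl⟩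
    refine ⟨d, ?_⟩
    apply RingOfIntegers.coe_injective
    rw [map_mul, map_pow, map_ofNat]
    change (π : K) ^ 37 = 37 * (d : K)
    rw [hd]
    field_simp
  obtain ⟨η, hη⟩ := H (4 / (π : K))
  set β : 𝓞 K := 4 + (-(η * π)) with hβ
  have hβK : (β : K) = (4 / (π : K) - η) * π := by
    rw [hβ]
    simp only [map_add, map_neg, map_mul, map_ofNat]
    field_simp
    ring
  have hβlt : |Algebra.norm ℤ β| < 37 := by
    have : |Algebra.norm ℚ (β : K)| < 37 := by
      rw [hβK, map_mul, abs_mul, hπN]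
      norm_num
      linarith
    rw [← Algebra.coe_norm_int] at this
    exact_mod_cast this
  have hmod : ((Algebra.norm ℤ β : ℤ) : ZMod 37) = 34 := by
    obtain ⟨r, hr⟩ := frob_aux 37 (by norm_num) (4 : 𝓞 K) (-(η * π))
    obtain ⟨s, hs⟩ := hd
    have e : β ^ 37 = 4 ^ 37 + ((37 : ℕ) : 𝓞 K) * (r - η ^ 37 * s) := by
      rw [hβ, hr, Odd.neg_pow (by decide), mul_pow, hs]; push_cast; ring
    have e2 := norm_congr_aux 37 (4 ^ 37 : 𝓞 K) (r - η ^ 37 * s)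
    rw [← e, map_pow, map_pow, Int.cast_pow, Int.cast_pow, ZMod.pow_card, ZMod.pow_card] at e2
    rw [e2]
    have e3 : Algebra.norm ℤ (4 : 𝓞 K) = 4 ^ 4 := by
      have := Algebra.norm_algebraMap (S := 𝓞 K) (4 : ℤ)
      rw [RingOfIntegers.rank, h4] at this
      simpa using this
    rw [e3]; rfl
  have hβL : Algebra.norm ℤ (algebraMap (𝓞 K) (𝓞 L) β) = (Algebra.norm ℤ β) ^ 9 := by
    have : (Algebra.norm ℤ (algebraMap (𝓞 K) (𝓞 L) β) : ℚ) = ((Algebra.norm ℤ β : ℤ) : ℚ) ^ 9 := by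
      rw [Algebra.coe_norm_int, Algebra.coe_norm_int, ← Algebra.norm_norm (R := ℚ) (S := K)]
      change Algebra.norm ℚ (Algebra.norm K (algebraMap K L (β : K))) = _
      rw [Algebra.norm_algebraMap, hfin, map_pow]
    exact_mod_cast this
  have hcase : Algebra.norm ℤ β = 34 ∨ Algebra.norm ℤ β = -3 := by
    have h37 : ((Algebra.norm ℤ β : ℤ) : ZMod 37) = ((34 : ℤ) : ZMod 37) := by rw [hmod]; rfl
    rw [ZMod.intCast_eq_intCast_iff_dvd_sub] at h37
    rw [abs_lt] at hβlt
    omega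
  rcases hcase with h | h
  · exact no34 _ (by rw [hβL, h])
  · exact no3 _ (by rw [hβL, h])

/-- The complex (totally imaginary) cyclic quartic subfield of ℚ(ζ_37)
is not norm-Euclidean. -/
theorem cyclic_quartic_conductor_37_not_normEuclidean
    {K : Type*} [Field K] [NumberField K]
    (him : IsTotallyImaginary K) (h4 : Module.finrank ℚ K = 4)
    (hsub : Nonempty (K →ₐ[ℚ] CyclotomicField 37 ℚ)) :
    ¬ IsNormEuclidean K := by
  intro H
  obtain ⟨f⟩ := hsub
  let _ : Algebra K (CyclotomicField 37 ℚ) := f.toRingHom.toAlgebra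
  have : IsCyclotomicExtension {37} ℚ (CyclotomicField 37 ℚ) := by
    have h := CyclotomicField.isCyclotomicExtension 37 ℚ
    have e : (DivisionRing.toRatAlgebra : Algebra ℚ (CyclotomicField 37 ℚ)) =
      CyclotomicField.algebra 37 ℚ := Subsingleton.elim _ _
    rw [e]
    exact h
  exact main_aux (L := CyclotomicField 37 ℚ) h4 H
end

section
/- In the ring of integers R of K = ℚ(√−2, √−7), every unit is congruent to 1 modulo 2R. -/
open NumberField

lemma aux_rat_sq (k : ℤ) (hk : Squarefree k) (hk0 : k ≠ 0) (x : ℚ) (j : ℤ)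
    (h : (k : ℚ) * x ^ 2 = j) : ∃ n : ℤ, x = n := by
  have hkq : (k : ℚ) ≠ 0 := by exact_mod_cast hk0
  have h1 : IsIntegral ℤ ((k : ℚ) * x) := by
    refine IsIntegral.of_pow (n := 2) (by norm_num) ?_
    have : ((k : ℚ) * x) ^ 2 = algebraMap ℤ ℚ (k * j) := by
      simp only [eq_intCast]; push_cast; rw [← h]; ring
    rw [this]; exact isIntegral_algebraMap
  obtain ⟨m, hm⟩ := IsIntegrallyClosed.isIntegral_iff.mp h1
  simp only [eq_intCast] at hm
  have h2 : m ^ 2 = k * j := by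
    have : (m : ℚ) ^ 2 = k * j := by rw [hm, ← h]; ring
    exact_mod_cast this
  have h3 : k ∣ m := (hk.dvd_pow_iff_dvd (by norm_num)).mp ⟨j, h2⟩
  obtain ⟨n, rfl⟩ := h3
  refine ⟨n, ?_⟩
  push_cast at hm
  exact (mul_left_cancel₀ hkq hm).symm

lemma sqf2 : Squarefree (2 : ℤ) := Int.prime_two.squarefree
lemma sqf7 : Squarefree (7 : ℤ) := (Int.prime_iff_natAbs_prime.mpr (by norm_num)).squarefree
lemma sqf14 : Squarefree (14 : ℤ) := by
  rw [← Int.squarefree_natAbs]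
  have : (Int.natAbs 14) = 2 * 7 := rfl
  rw [this, Nat.squarefree_mul (by norm_num)]
  exact ⟨Nat.prime_two.squarefree, (by norm_num : Nat.Prime 7).squarefree⟩

/-- irrationality of √14 -/
lemma irr14 (p s : ℚ) (h : p ^ 2 = 14 * s ^ 2) : p = 0 ∧ s = 0 := by
  by_cases hs : s = 0
  · subst hs; simpa using h
  exfalso
  have h2 : (((1 : ℤ) : ℚ)) * (p / s) ^ 2 = ((14 : ℤ) : ℚ) := by
    push_cast; field_simp; linarith
  obtain ⟨n, hn⟩ := aux_rat_sq 1 squarefree_one (by norm_num) _ _ h2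
  rw [hn] at h2
  have h3 : n ^ 2 = 14 := by push_cast at h2; rw [one_mul] at h2; exact_mod_cast (show ((n ^ 2 : ℤ) : ℚ) = ((14 : ℤ) : ℚ) by push_cast; exact h2)
  have : n ≤ 4 := by nlinarith
  have : -4 ≤ n := by nlinarith
  interval_cases n <;> omega

lemma norm_one (D : ℤ) (hD : D = 2 ∨ D = 7) (c d : ℚ) (h : c ^ 2 + D * d ^ 2 = 1) (m : ℤ)
    (hm : 2 * c = m) : d = 0 ∧ (c = 1 ∨ c = -1) := by
  have h1 : (D : ℚ) * (2 * d) ^ 2 = ((4 - m ^ 2 : ℤ) : ℚ) := by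
    push_cast; rw [← hm]; linarith
  obtain ⟨t, ht⟩ := aux_rat_sq D (by rcases hD with rfl | rfl; exacts [sqf2, sqf7])
    (by omega) _ _ h1
  rw [ht] at h1
  have h2 : D * t ^ 2 = 4 - m ^ 2 := by exact_mod_cast h1
  have key : t = 0 ∧ (m = 2 ∨ m = -2) := by
    have h3 : m ≤ 2 := by rcases hD with rfl | rfl <;> nlinarith [sq_nonneg t]
    have h4 : -2 ≤ m := by rcases hD with rfl | rfl <;> nlinarith [sq_nonneg t]
    have h5 : t ≤ 1 := by rcases hD with rfl | rfl <;> nlinarith [sq_nonneg m]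
    have h6 : -1 ≤ t := by rcases hD with rfl | rfl <;> nlinarith [sq_nonneg m]
    rcases hD with rfl | rfl <;> interval_cases m <;> interval_cases t <;> omega
  obtain ⟨rfl, hm'⟩ := key
  refine ⟨by simpa using ht, ?_⟩
  rcases hm' with rfl | rfl
  · left; push_cast at hm; linarith
  · right; push_cast at hm; linarith

lemma pell14 (p s : ℚ) (m : ℤ) (hm : 2 * p = m)
    (h : p ^ 2 - 14 * s ^ 2 = 1 ∨ p ^ 2 - 14 * s ^ 2 = -1) :
    ∃ x y : ℤ, p = 1 + 2 * x ∧ s = 2 * y := by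
  obtain ⟨e, he, h⟩ : ∃ e : ℤ, (e = 1 ∨ e = -1) ∧ p ^ 2 - 14 * s ^ 2 = e := by
    rcases h with h | h
    · exact ⟨1, Or.inl rfl, by simpa using h⟩
    · exact ⟨-1, Or.inr rfl, by simpa using h⟩
  have h1 : ((14 : ℤ) : ℚ) * (2 * s) ^ 2 = ((m ^ 2 - 4 * e : ℤ) : ℚ) := by
    push_cast; rw [← hm]; linarith
  obtain ⟨t, ht⟩ := aux_rat_sq 14 sqf14 (by norm_num) _ _ h1
  rw [ht] at h1
  have h2 : 14 * t ^ 2 = m ^ 2 - 4 * e := by exact_mod_cast h1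
  have hme : Even m := by
    rcases Int.even_or_odd m with h | ⟨k, rfl⟩
    · exact h
    · ring_nf at h2; omega
  obtain ⟨k, rfl⟩ := hme
  have hte : Even t := by
    rcases Int.even_or_odd t with h | ⟨l, rfl⟩
    · exact h
    · ring_nf at h2; omega
  obtain ⟨l, rfl⟩ := hte
  have h3 : k ^ 2 - 14 * l ^ 2 = e := by linarith
  have h7 : e = 1 := by
    rcases he with rfl | rfl
    · rfl
    · exfalso
      have : k ^ 2 % 7 = 6 := by omega
      have h8 : k % 7 = 0 ∨ k % 7 = 1 ∨ k % 7 = 2 ∨ k % 7 = 3 ∨ k % 7 = 4 ∨ k % 7 = 5 ∨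
        k % 7 = 6 := by omega
      rcases h8 with h | h | h | h | h | h | h <;> simp [pow_two, Int.mul_emod, h] at this
  subst h7
  have hk : Odd k := by
    rcases Int.even_or_odd k with ⟨x, rfl⟩ | h
    · ring_nf at h3; omega
    · exact h
  obtain ⟨x, rfl⟩ := hk
  have hl : Even l := by
    rcases Int.even_or_odd l with h | ⟨y, rfl⟩
    · exact h
    · ring_nf at h3; omega
  obtain ⟨y, rfl⟩ := hl
  refine ⟨x, y, ?_, ?_⟩
  · push_cast at hm; linarith
  · push_cast at ht; linarith

lemma pell27 (q r : ℚ) (i : ℤ) (hi : 8 * q ^ 2 = i)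
    (h : 7 * r ^ 2 - 2 * q ^ 2 = 1 ∨ 7 * r ^ 2 - 2 * q ^ 2 = -1) :
    ∃ x y : ℤ, q = 2 * x ∧ r = 1 + 2 * y := by
  obtain ⟨e, he, h⟩ : ∃ e : ℤ, (e = 1 ∨ e = -1) ∧ 7 * r ^ 2 - 2 * q ^ 2 = e := by
    rcases h with h | h
    · exact ⟨1, Or.inl rfl, by simpa using h⟩
    · exact ⟨-1, Or.inr rfl, by simpa using h⟩
  have h1 : ((2 : ℤ) : ℚ) * (2 * q) ^ 2 = (i : ℚ) := by
    push_cast; rw [← hi]; linarith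
  obtain ⟨k, hk⟩ := aux_rat_sq 2 sqf2 (by norm_num) _ _ h1
  have h1' : ((7 : ℤ) : ℚ) * (2 * r) ^ 2 = ((i + 4 * e : ℤ) : ℚ) := by
    push_cast; rw [← hi]; linarith
  obtain ⟨t, ht⟩ := aux_rat_sq 7 sqf7 (by norm_num) _ _ h1'
  have h2 : 7 * t ^ 2 - 2 * k ^ 2 = 4 * e := by
    have : (7 * t ^ 2 - 2 * k ^ 2 : ℚ) = 4 * e := by rw [← ht, ← hk]; linarith
    exact_mod_cast this
  have hte : Even t := by
    rcases Int.even_or_odd t with h | ⟨l, rfl⟩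
    · exact h
    · ring_nf at h2; omega
  obtain ⟨l, rfl⟩ := hte
  have hke : Even k := by
    rcases Int.even_or_odd k with h | ⟨x, rfl⟩
    · exact h
    · ring_nf at h2; omega
  obtain ⟨k, rfl⟩ := hke
  have h3 : 7 * l ^ 2 - 2 * k ^ 2 = e := by linarith
  have h7 : e = -1 := by
    rcases he with rfl | rfl
    · exfalso
      have : k ^ 2 % 7 = 3 := by omega
      have h8 : k % 7 = 0 ∨ k % 7 = 1 ∨ k % 7 = 2 ∨ k % 7 = 3 ∨ k % 7 = 4 ∨ k % 7 = 5 ∨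
        k % 7 = 6 := by omega
      rcases h8 with h | h | h | h | h | h | h <;> simp [pow_two, Int.mul_emod, h] at this
    · rfl
  subst h7
  have hl : Odd l := by
    rcases Int.even_or_odd l with ⟨x, rfl⟩ | h
    · ring_nf at h3; omega
    · exact h
  obtain ⟨y, rfl⟩ := hl
  have hk2 : Even k := by
    rcases Int.even_or_odd k with h | ⟨x, rfl⟩
    · exact h
    · exfalso
      obtain ⟨z, hz⟩ := Int.even_mul_succ_self y
      obtain ⟨w, hw⟩ := Int.even_mul_succ_self x
      have e1 : y ^ 2 = 2 * z - y := by linarith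
      have e2 : x ^ 2 = 2 * w - x := by linarith
      ring_nf at h3
      rw [e1, e2] at h3
      omega
  obtain ⟨x, rfl⟩ := hk2
  refine ⟨x, y, ?_, ?_⟩
  · push_cast at hk; linarith
  · push_cast at ht; linarith

section field
variable {K : Type*} [Field K] [NumberField K]

lemma indep_two (D : ℚ) (hD : 0 < D) (a : K) (ha : a ^ 2 = -(D : K)) (x y : ℚ)
    (h : (x : K) + y * a = 0) : x = 0 ∧ y = 0 := by
  have h1 : ((x ^ 2 + D * y ^ 2 : ℚ) : K) = 0 := by
    push_cast
    linear_combination (x - y * a) * h + (y : K) ^ 2 * ha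
  have h2 : x ^ 2 + D * y ^ 2 = 0 := by exact_mod_cast h1
  have h3 : x ^ 2 = 0 := by nlinarith [sq_nonneg x, mul_nonneg hD.le (sq_nonneg y)]
  have h4 : D * y ^ 2 = 0 := by nlinarith
  constructor
  · simpa using h3
  · simpa [hD.ne'] using h4

/-- the common algebra: signs -/
lemma sign_case (p q r s : ℚ) (e f : ℚ) (he : e = f ∨ e = -f)
    (h1 : p ^ 2 - 2 * q ^ 2 + 7 * r ^ 2 - 14 * s ^ 2 = e)
    (h2 : p ^ 2 + 2 * q ^ 2 - 7 * r ^ 2 - 14 * s ^ 2 = f) :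
    (q = 0 ∧ r = 0) ∨ (p = 0 ∧ s = 0) := by
  rcases he with rfl | rfl
  · left
    have := irr14 (7 * r) q (by linarith)
    exact ⟨this.2, by linarith [this.1]⟩
  · right
    exact irr14 p s (by linarith)

lemma indep_four (a b : K) (ha : a ^ 2 = -2) (hb : b ^ 2 = -7) (p q r s : ℚ)
    (h : (p : K) + q * a + r * b + s * (a * b) = 0) : p = 0 ∧ q = 0 ∧ r = 0 ∧ s = 0 := by
  have ha' : a ^ 2 = -((2 : ℚ) : K) := by rw [ha]; norm_num
  have hb' : b ^ 2 = -((7 : ℚ) : K) := by rw [hb]; norm_num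
  have h1 := indep_two 2 (by norm_num) a ha'
    (p ^ 2 - 2 * q ^ 2 + 7 * r ^ 2 - 14 * s ^ 2) (2 * (p * q + 7 * r * s)) (by
      push_cast
      linear_combination ((p : K) + q * a - r * b - s * (a * b)) * h
        - (q ^ 2 - b ^ 2 * s ^ 2 : K) * ha + ((r:K) ^ 2 + 2 * r * s * a - 2 * s ^ 2) * hb)
  have h2 := indep_two 7 (by norm_num) b hb'
    (p ^ 2 + 2 * q ^ 2 - 7 * r ^ 2 - 14 * s ^ 2) (2 * (p * r + 2 * q * s)) (by
      push_cast
      linear_combination ((p : K) - q * a + r * b - s * (a * b)) * h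
        - (r ^ 2 - a ^ 2 * s ^ 2 : K) * hb + ((q:K) ^ 2 + 2 * q * s * b - 7 * s ^ 2) * ha)
  have h3 := irr14 p s (by linarith [h1.1, h2.1])
  have h4 := irr14 (7 * r) q (by linarith [h1.1, h2.1])
  exact ⟨h3.1, h4.2, by linarith [h4.1], h3.2⟩

lemma exists_basis (a b : K) (ha : a ^ 2 = -2) (hb : b ^ 2 = -7)
    (h4 : Module.finrank ℚ K = 4) :
    ∃ B : Module.Basis (Fin 4) ℚ K, ⇑B = ![1, a, b, a * b] := by
  have hli : LinearIndependent ℚ ![1, a, b, a * b] := by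
    rw [Fintype.linearIndependent_iff]
    intro g hg
    simp only [Fin.sum_univ_four, Algebra.smul_def, eq_ratCast] at hg
    have := indep_four a b ha hb (g 0) (g 1) (g 2) (g 3) (by simpa using hg)
    intro i
    fin_cases i
    exacts [this.1, this.2.1, this.2.2.1, this.2.2.2]
  exact ⟨basisOfLinearIndependentOfCardEqFinrank hli (by simp [h4]), by simp⟩

lemma coords (a b : K) (ha : a ^ 2 = -2) (hb : b ^ 2 = -7)
    (h4 : Module.finrank ℚ K = 4) (x : K) :
    ∃ p q r s : ℚ, x = p + q * a + r * b + s * (a * b) := by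
  obtain ⟨B, hB⟩ := exists_basis a b ha hb h4
  refine ⟨B.repr x 0, B.repr x 1, B.repr x 2, B.repr x 3, ?_⟩
  conv_lhs => rw [← B.sum_repr x]
  simp [Fin.sum_univ_four, Algebra.smul_def, hB]

lemma exists_hom (a b : K) (ha : a ^ 2 = -2) (hb : b ^ 2 = -7)
    (h4 : Module.finrank ℚ K = 4) (c d : K) (hc : c ^ 2 = -2) (hd : d ^ 2 = -7) :
    ∃ f : K →ₐ[ℚ] K, f a = c ∧ f b = d := by
  obtain ⟨B, hB⟩ := exists_basis a b ha hb h4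
  let g : K →ₗ[ℚ] K := B.constr ℚ ![1, c, d, c * d]
  have g0 : g 1 = 1 := by have := B.constr_basis ℚ ![1, c, d, c * d] 0; rw [hB] at this; exact this
  have g1 : g a = c := by have := B.constr_basis ℚ ![1, c, d, c * d] 1; rw [hB] at this; exact this
  have g2 : g b = d := by have := B.constr_basis ℚ ![1, c, d, c * d] 2; rw [hB] at this; exact this
  have g3 : g (a * b) = c * d := by
    have := B.constr_basis ℚ ![1, c, d, c * d] 3; rw [hB] at this; exact this
  have gg : ∀ p q r s : ℚ, g (p + q * a + r * b + s * (a * b)) =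
      p + q * c + r * d + s * (c * d) := by
    intro p q r s
    have : (p + q * a + r * b + s * (a * b) : K) = p • (1 : K) + q • a + r • b + s • (a * b) := by
      simp [Algebra.smul_def]
    rw [this]
    simp only [map_add, map_smul, g0, g1, g2, g3]
    simp [Algebra.smul_def]
  refine ⟨AlgHom.ofLinearMap g g0 ?_, g1, g2⟩
  intro x y
  obtain ⟨p, q, r, s, rfl⟩ := coords a b ha hb h4 x
  obtain ⟨p', q', r', s', rfl⟩ := coords a b ha hb h4 y
  have key : ∀ a b : K, a ^ 2 = -2 → b ^ 2 = -7 →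
      (p + q * a + r * b + s * (a * b) : K) * (p' + q' * a + r' * b + s' * (a * b)) =
      ((p * p' - 2 * q * q' - 7 * r * r' + 14 * s * s' : ℚ) : K) +
      ((p * q' + q * p' - 7 * r * s' - 7 * s * r' : ℚ) : K) * a +
      ((p * r' + r * p' - 2 * q * s' - 2 * s * q' : ℚ) : K) * b +
      ((p * s' + s * p' + q * r' + r * q' : ℚ) : K) * (a * b) := by
    intro a b ha hb
    push_cast
    linear_combination ((q : K) * q' + (q * s' + s * q') * b + s * s' * b ^ 2) * ha +
      ((r : K) * r' + (r * s' + s * r') * a - 2 * s * s') * hb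
  rw [key a b ha hb, gg, gg, gg, key c d hc hd]

lemma rat_int (x : ℚ) (h : IsIntegral ℤ (x : K)) : ∃ n : ℤ, x = n := by
  have h' : IsIntegral ℤ x := by
    rw [← eq_ratCast (algebraMap ℚ K) x] at h
    exact (isIntegral_algebraMap_iff (algebraMap ℚ K).injective).mp h
  obtain ⟨n, hn⟩ := IsIntegrallyClosed.isIntegral_iff.mp h'
  exact ⟨n, by simpa using hn.symm⟩

/-- a unit of an imaginary quadratic field is ±1 -/
lemma quad_unit (D : ℤ) (hD : D = 2 ∨ D = 7) (a : K) (ha : a ^ 2 = -(D : K))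
    (f : K →ₐ[ℚ] K) (hf : f a = -a) (c d c' d' : ℚ)
    (h1 : IsIntegral ℤ ((c : K) + d * a)) (h2 : IsIntegral ℤ ((c' : K) + d' * a))
    (h : ((c : K) + d * a) * (c' + d' * a) = 1) : d = 0 ∧ (c = 1 ∨ c = -1) := by
  have F : ∀ x y : ℚ, f (x + y * a) = x - y * a := by
    intro x y; simp [hf]; ring
  have I : ∀ x y : ℚ, IsIntegral ℤ ((x : K) + y * a) → IsIntegral ℤ ((x : K) - y * a) := by
    intro x y h
    rw [← F]
    exact h.map (f.restrictScalars ℤ)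
  have N : ∀ x y : ℚ, IsIntegral ℤ ((x : K) + y * a) → ∃ n : ℤ, x ^ 2 + D * y ^ 2 = n := by
    intro x y h
    apply rat_int (K := K)
    have := h.mul (I x y h)
    refine Eq.mpr (congrArg (IsIntegral ℤ) ?_) this
    push_cast
    linear_combination (y : K) ^ 2 * ha
  obtain ⟨n, hn⟩ := N _ _ h1
  obtain ⟨n', hn'⟩ := N _ _ h2
  have hfh := congrArg f h
  rw [map_mul, F, F, map_one] at hfh
  have hprod : (c ^ 2 + D * d ^ 2) * (c' ^ 2 + D * d' ^ 2) = 1 := by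
    have : (((c ^ 2 + D * d ^ 2) * (c' ^ 2 + D * d' ^ 2) : ℚ) : K) = 1 := by
      have e1 : ((c : K) ^ 2 + D * d ^ 2) = (c + d * a) * (c - d * a) := by
        linear_combination (d : K) ^ 2 * ha
      have e2 : ((c' : K) ^ 2 + D * d' ^ 2) = (c' + d' * a) * (c' - d' * a) := by
        linear_combination (d' : K) ^ 2 * ha
      push_cast
      rw [e1, e2]
      linear_combination ((c : K) - d * a) * (c' - d' * a) * h + hfh
    exact_mod_cast this
  have hDq : (0 : ℚ) ≤ D := by rcases hD with rfl | rfl <;> norm_num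
  have hn0 : 0 ≤ n := by
    have : (0 : ℚ) ≤ n := by rw [← hn]; positivity
    exact_mod_cast this
  rw [hn, hn'] at hprod
  have hp : n * n' = 1 := by exact_mod_cast hprod
  have hn1 : n = 1 := by
    rcases Int.eq_one_or_neg_one_of_mul_eq_one hp with h | h <;> omega
  obtain ⟨m, hm⟩ : ∃ m : ℤ, 2 * c = m := by
    apply rat_int (K := K)
    have := h1.add (I _ _ h1)
    refine Eq.mpr (congrArg (IsIntegral ℤ) ?_) this
    push_cast; ring
  exact norm_one D hD c d (by rw [hn, hn1]; simp) m hm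

end field

/-- In the ring of integers of `K = ℚ(√-2, √-7)`, every unit is
congruent to 1 modulo 2. -/
theorem units_congruent_one_mod_two
    {K : Type*} [Field K] [NumberField K]
    (a b : K) (ha : a ^ 2 = -2) (hb : b ^ 2 = -7)
    (h4 : Module.finrank ℚ K = 4) :
    ∀ u : (𝓞 K)ˣ, ∃ v : 𝓞 K, (u : 𝓞 K) - 1 = 2 * v := by
  intro u
  suffices H : ∃ v : K, IsIntegral ℤ v ∧ ((u : 𝓞 K) : K) - 1 = 2 * v by
    obtain ⟨v, hv, h⟩ := H
    obtain ⟨v, rfl⟩ : ∃ v' : 𝓞 K, (v' : K) = v := ⟨⟨v, hv⟩, rfl⟩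
    refine ⟨v, ?_⟩
    apply RingOfIntegers.coe_injective
    rw [map_sub, map_one, map_mul, map_ofNat]
    exact h
  have hu : IsIntegral ℤ ((u : 𝓞 K) : K) := RingOfIntegers.isIntegral_coe _
  have hw : IsIntegral ℤ (((u⁻¹ : (𝓞 K)ˣ) : 𝓞 K) : K) := RingOfIntegers.isIntegral_coe _
  have huw : ((u : 𝓞 K) : K) * (((u⁻¹ : (𝓞 K)ˣ) : 𝓞 K) : K) = 1 := by
    rw [← map_mul, Units.mul_inv, map_one]
  generalize ((u : 𝓞 K) : K) = x at *
  generalize (((u⁻¹ : (𝓞 K)ˣ) : 𝓞 K) : K) = w at *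
  obtain ⟨σ, sa, sb⟩ := exists_hom a b ha hb h4 (-a) b (by rw [neg_sq, ha]) hb
  obtain ⟨τ, ta, tb⟩ := exists_hom a b ha hb h4 a (-b) ha (by rw [neg_sq, hb])
  obtain ⟨p, q, r, s, rfl⟩ := coords a b ha hb h4 x
  obtain ⟨p', q', r', s', rfl⟩ := coords a b ha hb h4 w
  have Iσ : ∀ x : K, IsIntegral ℤ x → IsIntegral ℤ (σ x) := fun x h =>
    h.map (σ.restrictScalars ℤ)
  have Iτ : ∀ x : K, IsIntegral ℤ x → IsIntegral ℤ (τ x) := fun x h =>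
    h.map (τ.restrictScalars ℤ)
  have T : ∀ p q r s : ℚ, τ (p + q * a + r * b + s * (a * b)) =
      p + q * a - r * b - s * (a * b) := by
    intro p q r s; simp [ta, tb]; ring
  have S : ∀ p q r s : ℚ, σ (p + q * a + r * b + s * (a * b)) =
      p - q * a + r * b - s * (a * b) := by
    intro p q r s; simp [sa, sb]; ring
  have NT : ∀ p q r s : ℚ, (p + q * a + r * b + s * (a * b)) *
      τ (p + q * a + r * b + s * (a * b)) =
      ((p ^ 2 - 2 * q ^ 2 + 7 * r ^ 2 - 14 * s ^ 2 : ℚ) : K) +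
      ((2 * (p * q + 7 * r * s) : ℚ) : K) * a := by
    intro p q r s
    rw [T]; push_cast
    linear_combination (q ^ 2 - b ^ 2 * s ^ 2 : K) * ha
      - ((r:K) ^ 2 + 2 * r * s * a - 2 * s ^ 2) * hb
  have NS : ∀ p q r s : ℚ, (p + q * a + r * b + s * (a * b)) *
      σ (p + q * a + r * b + s * (a * b)) =
      ((p ^ 2 + 2 * q ^ 2 - 7 * r ^ 2 - 14 * s ^ 2 : ℚ) : K) +
      ((2 * (p * r + 2 * q * s) : ℚ) : K) * b := by
    intro p q r s
    rw [S]; push_cast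
    linear_combination (r ^ 2 - a ^ 2 * s ^ 2 : K) * hb
      - ((q:K) ^ 2 + 2 * q * s * b - 7 * s ^ 2) * ha
  have A := quad_unit 2 (Or.inl rfl) a (by rw [ha]; norm_num) σ sa _ _ _ _
    (NT p q r s ▸ hu.mul (Iτ _ hu)) (NT p' q' r' s' ▸ hw.mul (Iτ _ hw)) (by
      rw [← NT, ← NT, mul_mul_mul_comm, ← map_mul, huw, map_one, one_mul])
  have B := quad_unit 7 (Or.inr rfl) b (by rw [hb]; norm_num) τ tb _ _ _ _
    (NS p q r s ▸ hu.mul (Iσ _ hu)) (NS p' q' r' s' ▸ hw.mul (Iσ _ hw)) (by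
      rw [← NS, ← NS, mul_mul_mul_comm, ← map_mul, huw, map_one, one_mul])
  have hsum := hu.add (Iτ _ hu)
  rw [T] at hsum
  have hai : IsIntegral ℤ a := by
    refine IsIntegral.of_pow (n := 2) (by norm_num) ?_
    rw [ha]; exact_mod_cast isIntegral_algebraMap (R := ℤ) (A := K) (x := -2)
  have hbi : IsIntegral ℤ b := by
    refine IsIntegral.of_pow (n := 2) (by norm_num) ?_
    rw [hb]; exact_mod_cast isIntegral_algebraMap (R := ℤ) (A := K) (x := -7)
  have hz : ∀ n : ℤ, IsIntegral ℤ (n : K) := fun n => by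
    simpa using isIntegral_algebraMap (R := ℤ) (A := K) (x := n)
  have hcase := sign_case p q r s _ _ (by
    rcases A.2 with h | h <;> rcases B.2 with h' | h' <;> rw [h, h'] <;> norm_num) rfl rfl
  rcases hcase with ⟨rfl, rfl⟩ | ⟨rfl, rfl⟩
  · obtain ⟨m, hm⟩ : ∃ m : ℤ, 2 * p = m := by
      apply rat_int (K := K)
      refine Eq.mpr (congrArg (IsIntegral ℤ) ?_) hsum
      push_cast; ring
    obtain ⟨x, y, rfl, rfl⟩ := pell14 p s m hm (by
      rcases A.2 with h | h
      · left; linarith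
      · right; linarith)
    refine ⟨x + y * (a * b), (hz x).add ((hz y).mul (hai.mul hbi)), ?_⟩
    push_cast; ring
  · obtain ⟨i, hi⟩ : ∃ i : ℤ, 8 * q ^ 2 = i := by
      apply rat_int (K := K)
      have := (hsum.pow 2).neg
      refine Eq.mpr (congrArg (IsIntegral ℤ) ?_) this
      push_cast
      linear_combination (4 * (q : K) ^ 2) * ha
    obtain ⟨x, y, rfl, rfl⟩ := pell27 q r i hi (by
      rcases A.2 with h | h
      · left; linarith
      · right; linarith)
    have hwi : IsIntegral ℤ ((b - 1) / 2) := by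
      refine IsIntegral.of_pow (n := 1) (by norm_num) ?_
      refine ⟨Polynomial.X ^ 2 + Polynomial.X + Polynomial.C 2, by monicity!, ?_⟩
      simp
      linear_combination hb / 4
    refine ⟨x * a + y * b + (b - 1) / 2, (((hz x).mul hai).add ((hz y).mul hbi)).add hwi, ?_⟩
    push_cast; ring
end
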